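/- arXiv:1502.06507 — 2 statements merged into one kernel-verified Lean document; each statement's English description precedes it below -/
import Mathlib

section
/- For every real z with -1 < z < 1, the function P₃(z) = 12·Li₃((1+z)/2) − 6·ln((1+z)/2)·Li₂((1+z)/2) − π²·ln((1+z)/2) − 12·ζ(3) satisfies the differential relation d/dz[ (1−z²)·P₃′(z) ] = 6·Li₂((1−z)/2) − 6·ln((1+z)/2); that is, the function z ↦ (1−z²)·P₃′(z) has derivative 6·Li₂((1−z)/2) − 6·ln((1+z)/2) at every such z. -/
open Real

/-- The polylogarithm `Li s x = ∑_{k=1}^∞ x^k / k^s` for real `x` with `|x| < 1`. -/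
noncomputable def Li (s : ℕ) (x : ℝ) : ℝ := ∑' k : ℕ, x ^ (k + 1) / ((k : ℝ) + 1) ^ s

/-- `ζ(3) = ∑_{k=1}^∞ 1/k³`. -/
noncomputable def zeta3 : ℝ := ∑' k : ℕ, 1 / ((k : ℝ) + 1) ^ 3

/-!
Termwise differentiation gives `x · Li_{s+1}'(x) = Li_s(x)`. With `x = (1 + z) / 2`, the derivative
of `𝖯₃` is therefore an expression in `Li₂(x)` and `ln x · ln (1 - x)` over `x`, and Euler's
reflection formula, which relates `Li₂(x)` to `Li₂(1 - x)`, collapses it to a multiple of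
`Li₂(1 - x) / x`. Hence `(1 - z²) 𝖯₃'(z) = -12 y Li₂(y)` with `y = 1 - x = (1 - z) / 2`, and
`(y Li₂(y))' = Li₂(y) + Li₁(y) = Li₂(y) - ln (1 - y)`.
-/

open Set Filter Topology

section Polylogarithm

variable {s : ℕ} {x : ℝ}

theorem Li_apply_zero (s : ℕ) : Li s 0 = 0 := by simp [Li]

theorem Li_one_eq_neg_log (hx : |x| < 1) : Li 1 x = -log (1 - x) := by
  simpa only [Li, pow_one] using (hasSum_pow_div_log_of_abs_lt_one hx).tsum_eq

theorem Li_two_apply_one : Li 2 1 = π ^ 2 / 6 := by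
  have h := (hasSum_nat_add_iff' 1).2 hasSum_zeta_two
  simpa [Li] using h.tsum_eq

theorem continuousOn_Li (hs : 1 < s) : ContinuousOn (Li s) (Icc (-1) 1) := by
  refine continuousOn_tsum (u := fun k : ℕ => 1 / ((k : ℝ) + 1) ^ s) (fun k => by fun_prop) ?_ ?_
  · exact_mod_cast (summable_nat_add_iff 1).2 (summable_one_div_nat_pow.2 hs)
  · intro k x hx
    rw [norm_div, norm_pow, norm_of_nonneg (by positivity : 0 ≤ ((k : ℝ) + 1) ^ s)]
    gcongr
    exact pow_le_one₀ (norm_nonneg x) (abs_le.2 hx)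

theorem Li_eq_mul_tsum (s : ℕ) (x : ℝ) : Li s x = x * ∑' k : ℕ, x ^ k / ((k : ℝ) + 1) ^ s := by
  simp only [Li, ← tsum_mul_left, pow_succ', mul_div_assoc]

theorem hasDerivAt_Li_succ_tsum (s : ℕ) (hx : |x| < 1) :
    HasDerivAt (Li (s + 1)) (∑' k : ℕ, x ^ k / ((k : ℝ) + 1) ^ s) x := by
  obtain ⟨r, hxr, hr⟩ := exists_between hx
  have hr0 : 0 < r := (abs_nonneg x).trans_lt hxr
  have hterm (k : ℕ) (y : ℝ) : HasDerivAt (fun y : ℝ => y ^ (k + 1) / ((k : ℝ) + 1) ^ (s + 1))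
      (y ^ k / ((k : ℝ) + 1) ^ s) y := by
    refine ((hasDerivAt_pow (k + 1) y).div_const _).congr_deriv ?_
    push_cast [Nat.add_sub_cancel]
    field_simp
    ring
  have hbound (k : ℕ) (y : ℝ) (hy : y ∈ Metric.ball 0 r) :
      ‖y ^ k / ((k : ℝ) + 1) ^ s‖ ≤ r ^ k := by
    have hden : 1 ≤ ((k : ℝ) + 1) ^ s := one_le_pow₀ (by simp)
    rw [norm_div, norm_pow, norm_of_nonneg (zero_le_one.trans hden)]
    calc ‖y‖ ^ k / ((k : ℝ) + 1) ^ s ≤ ‖y‖ ^ k := div_le_self (by positivity) hden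
      _ ≤ r ^ k := by gcongr; exact (mem_ball_zero_iff.1 hy).le
  exact hasDerivAt_tsum_of_isPreconnected (summable_geometric_of_lt_one hr0.le hr)
    Metric.isOpen_ball (convex_ball 0 r).isPreconnected (fun k y _ => hterm k y) hbound
    (Metric.mem_ball_self hr0) (by simp) (mem_ball_zero_iff.2 hxr)

theorem hasDerivAt_Li_succ (s : ℕ) (hx : |x| < 1) (hx0 : x ≠ 0) :
    HasDerivAt (Li (s + 1)) (Li s x / x) x := by
  rw [Li_eq_mul_tsum, mul_div_cancel_left₀ _ hx0]
  exact hasDerivAt_Li_succ_tsum s hx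

theorem hasDerivAt_mul_Li_succ (s : ℕ) (hx : |x| < 1) :
    HasDerivAt (fun x => x * Li (s + 1) x) (Li (s + 1) x + Li s x) x := by
  rw [Li_eq_mul_tsum s]
  simpa only [one_mul] using (hasDerivAt_id' x).fun_mul (hasDerivAt_Li_succ_tsum s hx)

theorem hasDerivAt_Li_two (hx : |x| < 1) (hx0 : x ≠ 0) :
    HasDerivAt (Li 2) (-log (1 - x) / x) x := by
  rw [← Li_one_eq_neg_log hx]
  exact hasDerivAt_Li_succ 1 hx hx0

end Polylogarithm

section Reflection

/-- `f x = O(x)` near `0`, while `x * log x → 0`; the value at `0` relies on `Real.log 0 = 0`. -/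
theorem continuousAt_log_mul_of_differentiableAt {f : ℝ → ℝ} (hf : DifferentiableAt ℝ f 0)
    (hf0 : f 0 = 0) : ContinuousAt (fun x => log x * f x) 0 := by
  have hfO : f =O[𝓝 0] fun x => x := by simpa [hf0] using hf.isBigO_sub
  have hlog : Tendsto (fun x : ℝ => log x * x) (𝓝 0) (𝓝 0) := by
    simpa [mul_comm] using continuous_mul_log.tendsto 0
  have hlim := ((Asymptotics.isBigO_refl log (𝓝 0)).mul hfO).trans_tendsto hlog
  simpa [ContinuousAt] using hlim

theorem continuous_log_mul_log_one_sub : Continuous fun x => log x * log (1 - x) := by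
  have h0 : ContinuousAt (fun x => log x * log (1 - x)) 0 :=
    continuousAt_log_mul_of_differentiableAt (by fun_prop (disch := norm_num)) (by simp)
  rw [continuous_iff_continuousAt]
  intro x
  rcases eq_or_ne x 0 with rfl | hx0
  · exact h0
  rcases eq_or_ne x 1 with rfl | hx1
  · have h1 : ContinuousAt (fun x : ℝ => log (1 - x) * log (1 - (1 - x))) 1 :=
      ContinuousAt.comp_of_eq (f := fun x : ℝ => 1 - x) h0 (by fun_prop) (sub_self 1)
    simpa only [sub_sub_cancel, mul_comm] using h1
  · have hsub : 1 - x ≠ 0 := sub_ne_zero.2 hx1.symm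
    fun_prop (disch := assumption)

variable {x : ℝ}

theorem hasDerivAt_Li_two_add_Li_two_one_sub (hx : x ∈ Ioo 0 1) :
    HasDerivAt (fun x => Li 2 x + Li 2 (1 - x) + log x * log (1 - x)) 0 x := by
  obtain ⟨h0, h1⟩ := hx
  have hsub_ne : 1 - x ≠ 0 := by linarith
  have hsub : HasDerivAt (fun x : ℝ => 1 - x) (-1) x := (hasDerivAt_id' x).const_sub 1
  have hLi := hasDerivAt_Li_two (abs_lt.2 ⟨by linarith, h1⟩) h0.ne'
  have hLi_sub := (hasDerivAt_Li_two (x := 1 - x)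
    (abs_lt.2 ⟨by linarith, by linarith⟩) hsub_ne).comp x hsub
  have hlog := (hasDerivAt_log h0.ne').fun_mul (hsub.log hsub_ne)
  refine ((hLi.add hLi_sub).add hlog).congr_deriv ?_
  rw [sub_sub_cancel]
  field_simp
  ring

theorem Li_two_add_Li_two_one_sub (hx : x ∈ Ioo 0 1) :
    Li 2 x + Li 2 (1 - x) = π ^ 2 / 6 - log x * log (1 - x) := by
  let F : ℝ → ℝ := fun x => Li 2 x + Li 2 (1 - x) + log x * log (1 - x)
  have hcont : ContinuousOn F (Icc 0 x) := by
    have hLi := continuousOn_Li one_lt_two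
    refine ((hLi.mono ?_).add (hLi.comp (by fun_prop) ?_)).add
      continuous_log_mul_log_one_sub.continuousOn
    · exact Icc_subset_Icc (by norm_num) hx.2.le
    · exact fun y hy => ⟨by linarith [hy.2, hx.2], by linarith [hy.1]⟩
  obtain ⟨c, -, hc⟩ := exists_hasDerivAt_eq_slope F 0 hx.1 hcont
    fun y hy => hasDerivAt_Li_two_add_Li_two_one_sub ⟨hy.1, hy.2.trans hx.2⟩
  have hF0 : F 0 = π ^ 2 / 6 := by simp [F, Li_apply_zero, Li_two_apply_one]
  have hFx : F x = F 0 := by simpa [hx.1.ne', sub_eq_zero] using hc.symm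
  exact eq_sub_of_add_eq (hFx.trans hF0)

end Reflection

/-- The function `𝖯₃` of the family `𝖯ₙ` satisfying
`((1 - z²) 𝖯ₙ')' = -n 𝖯ₙ₋₁ - n (n - 1) 𝖯ₙ₋₂`, in closed form on `(-1, 1)`. -/
noncomputable def P₃ (z : ℝ) : ℝ :=
  12 * Li 3 ((1 + z) / 2) - 6 * log ((1 + z) / 2) * Li 2 ((1 + z) / 2)
    - π ^ 2 * log ((1 + z) / 2) - 12 * zeta3

section

variable {z : ℝ}

theorem hasDerivAt_P₃ (hz : z ∈ Ioo (-1) 1) :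
    HasDerivAt P₃ (-6 * Li 2 ((1 - z) / 2) / (1 + z)) z := by
  obtain ⟨h1, h2⟩ := hz
  have hx : (1 + z) / 2 ∈ Ioo 0 1 := ⟨by linarith, by linarith⟩
  have hx_abs : |(1 + z) / 2| < 1 := abs_lt.2 ⟨by linarith, hx.2⟩
  have hlin : HasDerivAt (fun z : ℝ => (1 + z) / 2) (1 / 2) z :=
    ((hasDerivAt_id' z).const_add 1).div_const 2
  have hLi3 := (hasDerivAt_Li_succ 2 hx_abs hx.1.ne').comp z hlin
  have hLi2 := (hasDerivAt_Li_two hx_abs hx.1.ne').comp z hlin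
  have hlog := hlin.log hx.1.ne'
  refine ((((hLi3.const_mul 12).sub ((hlog.const_mul 6).mul hLi2)).sub
    (hlog.const_mul (π ^ 2))).sub_const (12 * zeta3)).congr_deriv ?_
  have hreflection := Li_two_add_Li_two_one_sub hx
  have hone_sub : 1 - (1 + z) / 2 = (1 - z) / 2 := by ring
  have hz_ne : 1 + z ≠ 0 := by linarith
  rw [hone_sub] at hreflection ⊢
  rw [Function.comp_apply]
  field_simp
  linear_combination 6 * hreflection

theorem one_sub_sq_mul_deriv_P₃ (hz : z ∈ Ioo (-1) 1) :
    (1 - z ^ 2) * deriv P₃ z = -12 * ((1 - z) / 2 * Li 2 ((1 - z) / 2)) := by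
  have hz_ne : 1 + z ≠ 0 := by linarith [hz.1]
  rw [(hasDerivAt_P₃ hz).deriv]
  field_simp
  ring

end

theorem stmt_5 (z : ℝ) (h1 : -1 < z) (h2 : z < 1) :
    HasDerivAt (fun z : ℝ => (1 - z ^ 2) * deriv (fun z : ℝ =>
        12 * Li 3 ((1 + z) / 2) - 6 * Real.log ((1 + z) / 2) * Li 2 ((1 + z) / 2)
          - π ^ 2 * Real.log ((1 + z) / 2) - 12 * zeta3) z)
      (6 * Li 2 ((1 - z) / 2) - 6 * Real.log ((1 + z) / 2)) z := by
  change HasDerivAt (fun z => (1 - z ^ 2) * deriv P₃ z) _ z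
  have hy : |(1 - z) / 2| < 1 := abs_lt.2 ⟨by linarith, by linarith⟩
  have hlin : HasDerivAt (fun z : ℝ => (1 - z) / 2) (-1 / 2) z :=
    ((hasDerivAt_id' z).const_sub 1).div_const 2
  have hflux : HasDerivAt (fun z => -12 * ((1 - z) / 2 * Li 2 ((1 - z) / 2)))
      (6 * Li 2 ((1 - z) / 2) - 6 * log ((1 + z) / 2)) z := by
    refine (((hasDerivAt_mul_Li_succ 1 hy).comp z hlin).const_mul (-12)).congr_deriv ?_
    have hone_sub : 1 - (1 - z) / 2 = (1 + z) / 2 := by ring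
    rw [Li_one_eq_neg_log hy, hone_sub]
    ring
  refine hflux.congr_of_eventuallyEq ?_
  filter_upwards [Ioo_mem_nhds h1 h2] with w hw using one_sub_sq_mul_deriv_P₃ hw
end

section
/- For every real x with 0 < x < 1/2, the function M(x) = −4 + 24x + 12·(1−x)·ln(1−x) − 2·(1−x)·ln²(1−x) − (1/2)·ln⁴(1−x) − 12x·ln(x) − 4·(1−2x)·ln(1−x)·ln(x) − 2x·ln²(1−x)·ln(x) + 2·ln³(1−x)·ln(x) + (2 − ln²(1−x))·ln²(x) − (1−x)·(2 − 2·ln(1−x) + ln²(1−x))·ln²(x) + (4 − 4·ln(1−x) + 2·ln²(1−x))·Li₂(1−x) − (4 − 4·ln(x) + 2·ln²(x))·Li₂(x) − (2·ln²(1−x) − 4·ln(1−x)·ln(x) + 2·ln²(x))·Li₂(x/(x−1)) − 4·(1 − ln(x))·Li₃(x) + 4·(1 − ln(1−x))·Li₃(1−x) + 4·(ln(x) − ln(1−x))·Li₃(x/(x−1)) + 4·Li₄(1−x) − 4·Li₄(x) − 4·Li₄(x/(x−1)) has derivative M′(x) = ln²(x)·ln²(1−x). -/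
open Real

/-!
Write `l = log x`, `m = log (1 - x)`.

Integrating by parts repeatedly, `(-log x) ^ n / n! * Li_s(x) / x` has the primitive
`∑_{j + k = n} (-log x) ^ j / j! * Li_{s+1+k}(x)`. The polylogarithmic terms of the function are
combinations of these primitives for `s = 1` at `x`, `1 - x` and `x / (x - 1)`, and `Li_1` is
elementary at each of the three points, so they contribute only logarithms to the derivative.

For a polynomial `P` in `l` and `m`, `d/dx (x * P) = P + ∂P/∂l + ∂P/∂m - (∂P/∂m) / (1 - x)`.
The solution of `P + ∂P/∂l + ∂P/∂m = l ^ 2 * m ^ 2` yields the integrand and leaves the error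
`-(∂P/∂m) / (1 - x)`, which is made up for by a polynomial in `l` and `m` together with the
polylogarithmic terms.
-/

section Polylogarithm

open Finset
open scoped Nat

lemma hasDerivAt_pow_succ_div_succ_pow (s n : ℕ) (x : ℝ) :
    HasDerivAt (fun y : ℝ => y ^ (n + 1) / ((n : ℝ) + 1) ^ (s + 1))
      (x ^ n / ((n : ℝ) + 1) ^ s) x := by
  refine ((hasDerivAt_pow (n + 1) x).div_const _).congr_deriv ?_
  have : (n : ℝ) + 1 ≠ 0 := by positivity
  rw [Nat.cast_succ, add_tsub_cancel_right, pow_succ]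
  field_simp

lemma norm_pow_div_succ_pow_le {r x : ℝ} (hx : ‖x‖ ≤ r) (s n : ℕ) :
    ‖x ^ n / ((n : ℝ) + 1) ^ s‖ ≤ r ^ n := by
  have one_le : (1 : ℝ) ≤ ((n : ℝ) + 1) ^ s := one_le_pow₀ (by simp)
  rw [norm_div, norm_pow, Real.norm_of_nonneg (zero_le_one.trans one_le)]
  exact (div_le_self (by positivity) one_le).trans (by gcongr)

lemma hasDerivAt_Li (s : ℕ) {x : ℝ} (hx : |x| < 1) (hx0 : x ≠ 0) :
    HasDerivAt (Li (s + 1)) (Li s x / x) x := by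
  obtain ⟨r, hxr, hr⟩ := exists_between hx
  have hr0 : 0 < r := (abs_nonneg x).trans_lt hxr
  have hderiv : HasDerivAt (Li (s + 1)) (∑' n : ℕ, x ^ n / ((n : ℝ) + 1) ^ s) x :=
    hasDerivAt_tsum_of_isPreconnected (summable_geometric_of_lt_one hr0.le hr) Metric.isOpen_ball
      (convex_ball (0 : ℝ) r).isPreconnected
      (fun n y _ => hasDerivAt_pow_succ_div_succ_pow s n y)
      (fun n y hy => norm_pow_div_succ_pow_le (mem_ball_zero_iff.1 hy).le s n)
      (Metric.mem_ball_self hr0) (by simp) (mem_ball_zero_iff.2 hxr)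
  refine hderiv.congr_deriv ?_
  rw [Li, ← tsum_div_const]
  refine tsum_congr fun n => ?_
  rw [pow_succ, div_right_comm, mul_div_cancel_right₀ _ hx0]

lemma Li_one {x : ℝ} (hx : |x| < 1) : Li 1 x = -log (1 - x) := by
  simpa [Li] using (hasSum_pow_div_log_of_abs_lt_one hx).tsum_eq

/-- The primitive of `(-log x) ^ n / n! * Li s x / x` obtained by `n` integrations by parts. Since
`Real.log` is `log |x|`, it serves negative `x` as well. -/
noncomputable def logPowLiPrimitive (n s : ℕ) (x : ℝ) : ℝ :=
  ∑ p ∈ antidiagonal n, (-log x) ^ p.1 / (p.1)! * Li (s + 1 + p.2) x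

lemma logPowLiPrimitive_zero (s : ℕ) (x : ℝ) : logPowLiPrimitive 0 s x = Li (s + 1) x := by
  simp [logPowLiPrimitive]

lemma logPowLiPrimitive_succ (n s : ℕ) (x : ℝ) :
    logPowLiPrimitive (n + 1) s x =
      logPowLiPrimitive n (s + 1) x + (-log x) ^ (n + 1) / (n + 1)! * Li (s + 1) x := by
  simp only [logPowLiPrimitive, Nat.sum_antidiagonal_succ', add_comm, add_left_comm]

lemma hasDerivAt_neg_log_pow_div_factorial (n : ℕ) {x : ℝ} (hx : x ≠ 0) :
    HasDerivAt (fun y => (-log y) ^ (n + 1) / (n + 1)!) (-((-log x) ^ n / n ! / x)) x := by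
  refine (((hasDerivAt_log hx).fun_neg.fun_pow (n + 1)).div_const _).congr_deriv ?_
  rw [Nat.factorial_succ, Nat.cast_mul, add_tsub_cancel_right]
  have : ((n + 1 : ℕ) : ℝ) ≠ 0 := Nat.cast_ne_zero.2 n.succ_ne_zero
  field_simp

lemma hasDerivAt_logPowLiPrimitive (n s : ℕ) {x : ℝ} (hx : |x| < 1) (hx0 : x ≠ 0) :
    HasDerivAt (logPowLiPrimitive n s) ((-log x) ^ n / n ! * Li s x / x) x := by
  induction n generalizing s with
  | zero =>
    simpa [funext (logPowLiPrimitive_zero s)] using hasDerivAt_Li s hx hx0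
  | succ n ih =>
    rw [funext (logPowLiPrimitive_succ n s)]
    refine ((ih (s + 1)).fun_add ((hasDerivAt_neg_log_pow_div_factorial n hx0).fun_mul
      (hasDerivAt_Li s hx hx0))).congr_deriv ?_
    ring

lemma hasDerivAt_sum_logPowLiPrimitive (N s : ℕ) {x : ℝ} (hx : |x| < 1) (hx0 : x ≠ 0) :
    HasDerivAt (fun y => ∑ n ∈ range N, logPowLiPrimitive n s y)
      ((∑ n ∈ range N, (-log x) ^ n / n !) * Li s x / x) x := by
  rw [sum_mul, sum_div]
  exact HasDerivAt.fun_sum fun n _ => hasDerivAt_logPowLiPrimitive n s hx hx0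

end Polylogarithm

section LandenArgument

open scoped Nat

variable {x : ℝ}

lemma abs_div_sub_one_lt_one (hx : x < 1 / 2) : |x / (x - 1)| < 1 := by
  rw [abs_div, abs_of_neg (show x - 1 < 0 by linarith), div_lt_one (by linarith), abs_lt]
  constructor <;> linarith

lemma log_div_sub_one (hx0 : x ≠ 0) (hx1 : x ≠ 1) :
    log (x / (x - 1)) = log x - log (1 - x) := by
  rw [log_div hx0 (sub_ne_zero.2 hx1), ← log_neg_eq_log (x - 1), neg_sub]

lemma Li_one_div_sub_one (hx : x < 1 / 2) : Li 1 (x / (x - 1)) = log (1 - x) := by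
  have hx1 : x - 1 ≠ 0 := by linarith
  have hinv : 1 - x / (x - 1) = (1 - x)⁻¹ := by
    rw [one_sub_div hx1, ← neg_sub x 1, inv_neg, ← one_div, ← neg_div]
    ring
  rw [Li_one (abs_div_sub_one_lt_one hx), hinv, log_inv, neg_neg]

lemma hasDerivAt_div_sub_one (hx : x ≠ 1) :
    HasDerivAt (fun y : ℝ => y / (y - 1)) (-1 / (x - 1) ^ 2) x := by
  refine ((hasDerivAt_id' x).fun_div ((hasDerivAt_id' x).sub_const 1)
    (sub_ne_zero.2 hx)).congr_deriv ?_
  ring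

lemma hasDerivAt_logPowLiPrimitive_div_sub_one (n s : ℕ) (hx0 : x ≠ 0) (hx : x < 1 / 2) :
    HasDerivAt (fun y => logPowLiPrimitive n s (y / (y - 1)))
      ((log (1 - x) - log x) ^ n / n ! * Li s (x / (x - 1)) / (x * (1 - x))) x := by
  have hx1 : x ≠ 1 := by linarith
  have hsub : x - 1 ≠ 0 := sub_ne_zero.2 hx1
  have hsub' : 1 - x ≠ 0 := sub_ne_zero.2 hx1.symm
  refine ((hasDerivAt_logPowLiPrimitive n s (abs_div_sub_one_lt_one hx)
    (div_ne_zero hx0 hsub)).comp x (hasDerivAt_div_sub_one hx1)).congr_deriv ?_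
  rw [log_div_sub_one hx0 hx1, neg_sub, ← neg_sub 1 x]
  field_simp

end LandenArgument

section LogarithmicPolynomials

/-- The polynomial solution `P` of `P + ∂P/∂l + ∂P/∂m = l ^ a * m ^ b`. With `l = log x` and
`m = log (1 - x)`, the function `x * P` is the first step in integrating
`log x ^ a * log (1 - x) ^ b` by parts. -/
def logPowCoeff : ℕ → ℕ → ℝ → ℝ → ℝ
  | 0, 0, _, _ => 1
  | a + 1, 0, l, m => l ^ (a + 1) - (a + 1) * logPowCoeff a 0 l m
  | 0, b + 1, l, m => m ^ (b + 1) - (b + 1) * logPowCoeff 0 b l m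
  | a + 1, b + 1, l, m => l ^ (a + 1) * m ^ (b + 1) - (a + 1) * logPowCoeff a (b + 1) l m
      - (b + 1) * logPowCoeff (a + 1) b l m

/-- The remaining elementary part of the primitive of `log x ^ 2 * log (1 - x) ^ 2`, as a polynomial
in `l = log x` and `m = log (1 - x)`: it compensates `2 * logPowCoeff 2 1 l m / (1 - x)` and the
derivatives of the polylogarithmic terms. -/
noncomputable def logCorrection (l m : ℝ) : ℝ :=
  -4 + 12 * m - 2 * m ^ 2 - 4 * (l * m) + 2 * (l ^ 2 * m) - 2 * (l ^ 2 * m ^ 2) + 2 * (l * m ^ 3)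
    - m ^ 4 / 2

lemma logPowCoeff_eq (a b : ℕ) (l m : ℝ) :
    logPowCoeff a b l m =
      l ^ a * m ^ b - a * logPowCoeff (a - 1) b l m - b * logPowCoeff a (b - 1) l m := by
  cases a <;> cases b <;> simp [logPowCoeff]

variable {x : ℝ}

lemma hasDerivAt_log_pow_mul_log_one_sub_pow (a b : ℕ) (hx0 : x ≠ 0) (hx1 : x ≠ 1) :
    HasDerivAt (fun y => log y ^ a * log (1 - y) ^ b)
      (a * log x ^ (a - 1) * log (1 - x) ^ b / x
        - b * log x ^ a * log (1 - x) ^ (b - 1) / (1 - x)) x := by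
  have hlog_one_sub : HasDerivAt (fun y => log (1 - y)) (-(1 - x)⁻¹) x :=
    (hasDerivAt_log (sub_ne_zero.2 hx1.symm)).comp_const_sub 1 x
  refine (((hasDerivAt_log hx0).fun_pow a).fun_mul (hlog_one_sub.fun_pow b)).congr_deriv ?_
  ring

lemma hasDerivAt_logPowCoeff (a b : ℕ) (hx0 : x ≠ 0) (hx1 : x ≠ 1) :
    HasDerivAt (fun y => logPowCoeff a b (log y) (log (1 - y)))
      (a * logPowCoeff (a - 1) b (log x) (log (1 - x)) / x
        - b * logPowCoeff a (b - 1) (log x) (log (1 - x)) / (1 - x)) x := by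
  induction hn : a + b generalizing a b with
  | zero =>
    obtain ⟨rfl, rfl⟩ := Nat.add_eq_zero_iff.1 hn
    simpa [logPowCoeff] using hasDerivAt_const x (1 : ℝ)
  | succ n ih =>
    have hleft : HasDerivAt (fun y => a * logPowCoeff (a - 1) b (log y) (log (1 - y)))
        (a * ((a - 1 : ℕ) * logPowCoeff (a - 1 - 1) b (log x) (log (1 - x)) / x
          - b * logPowCoeff (a - 1) (b - 1) (log x) (log (1 - x)) / (1 - x))) x := by
      rcases a with _ | a
      · simpa using hasDerivAt_const x (0 : ℝ)
      · exact (ih a b (by omega)).const_mul _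
    have hright : HasDerivAt (fun y => b * logPowCoeff a (b - 1) (log y) (log (1 - y)))
        (b * (a * logPowCoeff (a - 1) (b - 1) (log x) (log (1 - x)) / x
          - (b - 1 : ℕ) * logPowCoeff a (b - 1 - 1) (log x) (log (1 - x)) / (1 - x))) x := by
      rcases b with _ | b
      · simpa using hasDerivAt_const x (0 : ℝ)
      · exact (ih a b (by omega)).const_mul _
    rw [funext fun y => logPowCoeff_eq a b (log y) (log (1 - y)), logPowCoeff_eq (a - 1) b,
      logPowCoeff_eq a (b - 1)]
    refine (((hasDerivAt_log_pow_mul_log_one_sub_pow a b hx0 hx1).fun_sub hleft).fun_sub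
      hright).congr_deriv ?_
    ring

lemma hasDerivAt_mul_logPowCoeff (a b : ℕ) (hx0 : x ≠ 0) (hx1 : x ≠ 1) :
    HasDerivAt (fun y => y * logPowCoeff a b (log y) (log (1 - y)))
      (log x ^ a * log (1 - x) ^ b
        - b * logPowCoeff a (b - 1) (log x) (log (1 - x)) / (1 - x)) x := by
  refine ((hasDerivAt_id' x).fun_mul (hasDerivAt_logPowCoeff a b hx0 hx1)).congr_deriv ?_
  have : 1 - x ≠ 0 := sub_ne_zero.2 hx1.symm
  rw [logPowCoeff_eq a b]
  field_simp
  ring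

lemma hasDerivAt_logCorrection (hx0 : x ≠ 0) (hx1 : x ≠ 1) :
    HasDerivAt (fun y => logCorrection (log y) (log (1 - y)))
      (2 * logPowCoeff 2 1 (log x) (log (1 - x)) / (1 - x)
        - (4 - 4 * log (1 - x) + 2 * log (1 - x) ^ 2) * log x / (1 - x)
        - (4 - 4 * log x + 2 * log x ^ 2) * log (1 - x) / x
        + 2 * (log (1 - x) - log x) ^ 2 * log (1 - x) / (x * (1 - x))) x := by
  have hmonomial := fun a b => hasDerivAt_log_pow_mul_log_one_sub_pow a b hx0 hx1
  have hsum := ((hmonomial 0 1).const_mul 12).const_add (-4)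
    |>.fun_sub ((hmonomial 0 2).const_mul 2)
    |>.fun_sub ((hmonomial 1 1).const_mul 4)
    |>.fun_add ((hmonomial 2 1).const_mul 2)
    |>.fun_sub ((hmonomial 2 2).const_mul 2)
    |>.fun_add ((hmonomial 1 3).const_mul 2)
    |>.fun_sub ((hmonomial 0 4).div_const 2)
  simp only [pow_zero, one_mul, pow_one] at hsum
  refine hsum.congr_deriv ?_
  have : 1 - x ≠ 0 := sub_ne_zero.2 hx1.symm
  simp only [logPowCoeff]
  field_simp
  push_cast
  ring

end LogarithmicPolynomials

theorem stmt_11 (x : ℝ) (h1 : 0 < x) (h2 : x < 1 / 2) :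
    HasDerivAt (fun x : ℝ =>
      -4 + 24 * x + 12 * (1 - x) * Real.log (1 - x)
        - 2 * (1 - x) * Real.log (1 - x) ^ 2
        - (1 / 2) * Real.log (1 - x) ^ 4
        - 12 * x * Real.log x
        - 4 * (1 - 2 * x) * Real.log (1 - x) * Real.log x
        - 2 * x * Real.log (1 - x) ^ 2 * Real.log x
        + 2 * Real.log (1 - x) ^ 3 * Real.log x
        + (2 - Real.log (1 - x) ^ 2) * Real.log x ^ 2
        - (1 - x) * (2 - 2 * Real.log (1 - x) + Real.log (1 - x) ^ 2) * Real.log x ^ 2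
        + (4 - 4 * Real.log (1 - x) + 2 * Real.log (1 - x) ^ 2) * Li 2 (1 - x)
        - (4 - 4 * Real.log x + 2 * Real.log x ^ 2) * Li 2 x
        - (2 * Real.log (1 - x) ^ 2 - 4 * Real.log (1 - x) * Real.log x
            + 2 * Real.log x ^ 2) * Li 2 (x / (x - 1))
        - 4 * (1 - Real.log x) * Li 3 x
        + 4 * (1 - Real.log (1 - x)) * Li 3 (1 - x)
        + 4 * (Real.log x - Real.log (1 - x)) * Li 3 (x / (x - 1))
        + 4 * Li 4 (1 - x) - 4 * Li 4 x - 4 * Li 4 (x / (x - 1)))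
      (Real.log x ^ 2 * Real.log (1 - x) ^ 2) x := by
  have hx0 : x ≠ 0 := h1.ne'
  have hx1 : x ≠ 1 := by linarith
  have hx : |x| < 1 := abs_lt.2 ⟨by linarith, by linarith⟩
  have hx' : |1 - x| < 1 := abs_lt.2 ⟨by linarith, by linarith⟩
  have hprimitive := hasDerivAt_mul_logPowCoeff 2 2 hx0 hx1
    |>.fun_add (hasDerivAt_logCorrection hx0 hx1)
    |>.fun_add (((hasDerivAt_sum_logPowLiPrimitive 3 1 hx'
      (sub_ne_zero.2 hx1.symm)).comp_const_sub 1 x).const_mul 4)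
    |>.fun_sub ((hasDerivAt_sum_logPowLiPrimitive 3 1 hx hx0).const_mul 4)
    |>.fun_sub ((hasDerivAt_logPowLiPrimitive_div_sub_one 2 1 hx0 h2).const_mul 4)
  refine (hprimitive.congr_of_eventuallyEq ?_).congr_deriv ?_
  · filter_upwards [isOpen_ne.mem_nhds hx0, isOpen_ne.mem_nhds hx1] with y hy0 hy1
    simp only [logPowCoeff, logCorrection, Finset.sum_range_succ, Finset.sum_range_zero,
      logPowLiPrimitive_succ, logPowLiPrimitive_zero, log_div_sub_one hy0 hy1, Nat.factorial]
    push_cast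
    ring
  · simp only [Li_one hx, Li_one hx', Li_one_div_sub_one h2, sub_sub_cancel,
      Finset.sum_range_succ, Finset.sum_range_zero, Nat.factorial]
    push_cast
    ring
end
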